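/- Let κ : [a,b] → ℝ be continuous and u : [a,b] → [0,∞) continuous. If u satisfies u'' + κu ≤ 0 in the distributional sense, then for every constant speed geodesic γ : [0,1] → [a,b] with length θ, u(γ(t)) ≥ σ_{κ⁻_γ}^{(1-t)}(θ) u(γ(0)) + σ_{κ⁺_γ}^{(t)}(θ) u(γ(1)) for all t ∈ [0,1], where κ⁺_γ(s) = κ(γ̄(s)), κ⁻_γ(s) = κ(γ̄(θ-s)) and γ̄ is the unit-speed reparametrization of γ, with the convention ∞·0 = 0. -/

import Mathlib

/-! If `W'' = κ u`, the distributional inequality makes `u + W` weakly, hence (by mollification)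
genuinely concave, so `u'' + κ u ≤ 0` holds in the viscosity sense. Viscosity supersolutions `w`
restrict to geodesics and compare with positive solutions `h` of `h'' + k h = 0`: after a small
strict perturbation of `w`, an interior minimum of `w / h` would let a multiple of `h` touch `w`
from below, which is impossible. If both sin-functions are positive, taking for `w` the difference
between `u` and the solution with the same endpoint values gives the inequality. Otherwise some
sin-function has a conjugate point, where the same argument, applied to the sin-function itself,
shows that `u` vanishes at the start and at the conjugate point; by the strong minimum principle
`u` is then zero at both endpoints, and `∞ · 0 = 0` makes the left-hand side vanish. -/

open Set

/-- `s` is the generalized sin-function for curvature `κ` on `[0, L]`. -/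
def IsSinSolution (κ s s' : ℝ → ℝ) (L : ℝ) : Prop :=
  s 0 = 0 ∧ s' 0 = 1 ∧
    ∀ x ∈ Set.Icc (0:ℝ) L, HasDerivAt s (s' x) x ∧ HasDerivAt s' (-(κ x * s x)) x

section

open Filter Topology MeasureTheory
open scoped Convolution

/-- `f` is twice differentiable at `x` with second derivative `f''`. Only the first derivative is
required near `x`, so solutions of ODEs with merely continuous coefficients qualify. -/
def HasSecondDerivAt (f : ℝ → ℝ) (f'' x : ℝ) : Prop :=
  ∃ f' : ℝ → ℝ, (∀ᶠ y in 𝓝 x, HasDerivAt f (f' y) y) ∧ HasDerivAt f' f'' x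

/-- `f'' ≤ F` on `I` in the viscosity sense: a function touching `f` from below at `z ∈ I` has
second derivative at most `F z` there. -/
def ViscositySecondDerivLE (f F : ℝ → ℝ) (I : Set ℝ) : Prop :=
  ∀ z ∈ I, ∀ (ψ : ℝ → ℝ) (c : ℝ), HasSecondDerivAt ψ c z →
    IsLocalMin (fun r => f r - ψ r) z → c ≤ F z

/-- `h` is a classical solution of the Jacobi equation `h'' + k h = 0` on `I`. -/
def IsJacobiSolution (k h : ℝ → ℝ) (I : Set ℝ) : Prop :=
  ∀ z ∈ I, HasSecondDerivAt h (-(k z * h z)) z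

/-- `w'' + k w ≤ 0` on `I` in the viscosity sense. -/
def IsJacobiSupersolution (k w : ℝ → ℝ) (I : Set ℝ) : Prop :=
  ViscositySecondDerivLE w (fun z => -(k z * w z)) I

/-- `w'' + k w < 0` on `I` in the viscosity sense, pointwise and without a uniform gap. -/
def IsStrictJacobiSupersolution (k w : ℝ → ℝ) (I : Set ℝ) : Prop :=
  ∃ F : ℝ → ℝ, ViscositySecondDerivLE w F I ∧ ∀ z ∈ I, F z < -(k z * w z)

/-- The nonnegative test functions on `I` against which a distributional inequality is tested. -/
structure IsNonnegTestFunction (φ : ℝ → ℝ) (I : Set ℝ) : Prop where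
  contDiff : ContDiff ℝ (⊤ : ℕ∞) φ
  hasCompactSupport : HasCompactSupport φ
  tsupport_subset : tsupport φ ⊆ I
  nonneg : ∀ x, 0 ≤ φ x

/-- The unit-speed parametrization of the segment from `x` to `y`, starting at `x`; for `x = y` it
is constant. -/
noncomputable def unitSpeedSegment (x y r : ℝ) : ℝ := x + r / |y - x| * (y - x)

namespace HasSecondDerivAt

variable {f g : ℝ → ℝ} {c d x : ℝ}

lemma hasDerivAt_deriv (h : HasSecondDerivAt f c x) : HasDerivAt (deriv f) c x := by
  obtain ⟨f', hf, hf'⟩ := h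
  exact hf'.congr_of_eventuallyEq (hf.mono fun y hy => hy.deriv)

lemma differentiableAt (h : HasSecondDerivAt f c x) : DifferentiableAt ℝ f x :=
  let ⟨_, hf, _⟩ := h
  hf.self_of_nhds.differentiableAt

lemma const (a : ℝ) : HasSecondDerivAt (fun _ => a) 0 x :=
  ⟨fun _ => 0, .of_forall fun y => hasDerivAt_const y a, hasDerivAt_const x 0⟩

lemma add (hf : HasSecondDerivAt f c x) (hg : HasSecondDerivAt g d x) :
    HasSecondDerivAt (fun r => f r + g r) (c + d) x := by
  obtain ⟨f', hf, hf'⟩ := hf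
  obtain ⟨g', hg, hg'⟩ := hg
  exact ⟨fun r => f' r + g' r, by filter_upwards [hf, hg] with y h₁ h₂ using h₁.add h₂,
    hf'.add hg'⟩

lemma const_mul (a : ℝ) (hf : HasSecondDerivAt f c x) :
    HasSecondDerivAt (fun r => a * f r) (a * c) x := by
  obtain ⟨f', hf, hf'⟩ := hf
  exact ⟨fun r => a * f' r, hf.mono fun y h => h.const_mul a, hf'.const_mul a⟩

lemma sub (hf : HasSecondDerivAt f c x) (hg : HasSecondDerivAt g d x) :
    HasSecondDerivAt (fun r => f r - g r) (c - d) x := by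
  simpa [sub_eq_add_neg] using hf.add (hg.const_mul (-1))

lemma comp_affine (p e : ℝ) (hf : HasSecondDerivAt f c (p + e * x)) :
    HasSecondDerivAt (fun r => f (p + e * r)) (e ^ 2 * c) x := by
  obtain ⟨f', hf, hf'⟩ := hf
  have haffine (y : ℝ) : HasDerivAt (fun r => p + e * r) e y := by
    simpa using ((hasDerivAt_id y).const_mul e).const_add p
  refine ⟨fun r => f' (p + e * r) * e, ?_, ?_⟩
  · filter_upwards [(haffine x).continuousAt.eventually hf] with y hy
    exact hy.comp y (haffine y)
  · exact ((hf'.comp x (haffine x)).mul_const e).congr_deriv (by ring)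

lemma nonpos_of_isLocalMax (hf : HasSecondDerivAt f c x) (hmax : IsLocalMax f x) : c ≤ 0 := by
  by_contra! hc
  have hmin : IsLocalMin f x := isLocalMin_of_deriv_deriv_pos
    (by rwa [hf.hasDerivAt_deriv.deriv]) hmax.deriv_eq_zero hf.differentiableAt.continuousAt
  have hconst : f =ᶠ[𝓝 x] fun _ => f x := by
    filter_upwards [hmin, hmax] with y h₁ h₂ using le_antisymm h₂ h₁
  have hderiv : deriv f =ᶠ[𝓝 x] fun _ => 0 := by
    simpa only [deriv_const'] using hconst.deriv
  have hc_zero := hderiv.deriv_eq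
  rw [hf.hasDerivAt_deriv.deriv, deriv_const] at hc_zero
  exact hc.ne' hc_zero

end HasSecondDerivAt

lemma hasSecondDerivAt_cosh (μ p x : ℝ) :
    HasSecondDerivAt (fun r => Real.cosh (μ * (r - p)))
      (μ ^ 2 * Real.cosh (μ * (x - p))) x := by
  have hlin (y : ℝ) : HasDerivAt (fun r => μ * (r - p)) μ y := by
    simpa using ((hasDerivAt_id y).sub_const p).const_mul μ
  exact ⟨fun r => Real.sinh (μ * (r - p)) * μ, .of_forall fun y => (hlin y).cosh,
    ((hlin x).sinh.mul_const μ).congr_deriv (by ring)⟩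

lemma concaveOn_of_hasSecondDerivAt_nonpos {f f'' : ℝ → ℝ} {I : Set ℝ} (hI : Convex ℝ I)
    (hf : ∀ x ∈ I, HasSecondDerivAt f (f'' x) x) (hf'' : ∀ x ∈ I, f'' x ≤ 0) :
    ConcaveOn ℝ I f :=
  concaveOn_of_deriv2_nonpos' hI (fun x hx => (hf x hx).differentiableAt.differentiableWithinAt)
    (fun x hx => (hf x hx).hasDerivAt_deriv.differentiableAt.differentiableWithinAt)
    fun x hx => (hf x hx).hasDerivAt_deriv.deriv.trans_le (hf'' x hx)

namespace ViscositySecondDerivLE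

variable {f f₁ F F₁ g G : ℝ → ℝ} {I J : Set ℝ}

lemma mono (h : ViscositySecondDerivLE f F I) (hJI : J ⊆ I) : ViscositySecondDerivLE f F J :=
  fun z hz => h z (hJI hz)

lemma congr (h : ViscositySecondDerivLE f F I) (hI : IsOpen I) (hf : EqOn f f₁ I)
    (hF : EqOn F F₁ I) : ViscositySecondDerivLE f₁ F₁ I := by
  intro z hz ψ c hψ hmin
  rw [← hF hz]
  refine h z hz ψ c hψ (hmin.congr ?_)
  filter_upwards [hI.mem_nhds hz] with r hr
  rw [hf hr]

lemma add_hasSecondDerivAt (h : ViscositySecondDerivLE f F I)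
    (hg : ∀ z ∈ I, HasSecondDerivAt g (G z) z) :
    ViscositySecondDerivLE (fun r => f r + g r) (fun r => F r + G r) I := by
  intro z hz ψ c hψ hmin
  have := h z hz _ _ (hψ.sub (hg z hz)) (by simpa only [sub_sub_eq_add_sub] using hmin)
  linarith

lemma comp_affine {p e : ℝ} (h : ViscositySecondDerivLE f F I) (he : e ^ 2 = 1)
    (hJI : MapsTo (fun r => p + e * r) J I) :
    ViscositySecondDerivLE (fun r => f (p + e * r)) (fun r => F (p + e * r)) J := by
  intro z hz ψ c hψ hmin
  have hleft (r : ℝ) : -(e * p) + e * (p + e * r) = r := by linear_combination r * he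
  have hright (y : ℝ) : p + e * (-(e * p) + e * y) = y := by linear_combination (y - p) * he
  have hψ' := HasSecondDerivAt.comp_affine (x := p + e * z) (-(e * p)) e (by rwa [hleft])
  rw [he, one_mul] at hψ'
  refine h _ (hJI hz) _ c hψ' ?_
  have htendsto : Tendsto (fun y => -(e * p) + e * y) (𝓝 (p + e * z)) (𝓝 z) :=
    (by fun_prop : Continuous fun y => -(e * p) + e * y).tendsto' _ _ (hleft z)
  filter_upwards [htendsto.eventually hmin] with y hy
  simpa only [hleft, hright] using hy

end ViscositySecondDerivLE

lemma viscositySecondDerivLE_zero_of_concaveOn {f : ℝ → ℝ} {I : Set ℝ} (hI : IsOpen I)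
    (hf : ConcaveOn ℝ I f) : ViscositySecondDerivLE f (fun _ => 0) I := by
  intro z hz ψ c hψ hmin
  have hsum : HasSecondDerivAt (fun t => ψ (z + 1 * t) + ψ (z + (-1) * t)) (2 * c) 0 := by
    have h (e : ℝ) := HasSecondDerivAt.comp_affine (x := 0) z e (by simpa using hψ)
    simpa [two_mul] using (h 1).add (h (-1))
  -- Midpoint concavity of `f` passes to the second difference of `ψ` at the contact point.
  have hmax : IsLocalMax (fun t => ψ (z + 1 * t) + ψ (z + (-1) * t)) 0 := by
    have htendsto (e : ℝ) : Tendsto (fun t => z + e * t) (𝓝 0) (𝓝 z) :=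
      (by fun_prop : Continuous fun t => z + e * t).tendsto' 0 z (by simp)
    filter_upwards [(htendsto 1).eventually hmin, (htendsto (-1)).eventually hmin,
      (htendsto 1).eventually (hI.mem_nhds hz), (htendsto (-1)).eventually (hI.mem_nhds hz)]
      with t hp hm hpI hmI
    have hmid := hf.2 hpI hmI (by norm_num : (0 : ℝ) ≤ 1 / 2) (by norm_num : (0 : ℝ) ≤ 1 / 2)
      (by norm_num)
    have hcenter : (1 / 2 : ℝ) • (z + 1 * t) + (1 / 2 : ℝ) • (z + (-1) * t) = z := by
      simp only [smul_eq_mul]; ring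
    rw [hcenter] at hmid
    simp only [smul_eq_mul, mul_zero, add_zero] at hmid ⊢
    linarith
  linarith only [hsum.nonpos_of_isLocalMax hmax]

lemma IsStrictJacobiSupersolution.mono {k w : ℝ → ℝ} {I J : Set ℝ}
    (hw : IsStrictJacobiSupersolution k w I) (hJI : J ⊆ I) :
    IsStrictJacobiSupersolution k w J :=
  let ⟨F, hF, hlt⟩ := hw
  ⟨F, hF.mono hJI, fun z hz => hlt z (hJI hz)⟩

-- The perturbation is `2 - cosh (μ (r - p))` with `μ` large against the bound on `k`.
lemma IsJacobiSupersolution.exists_strict_perturbation {k w : ℝ → ℝ} {I : Set ℝ} {K : ℝ}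
    (hw : IsJacobiSupersolution k w I) (hk : ∀ r ∈ I, |k r| ≤ K) (p : ℝ) :
    ∃ η : ℝ → ℝ, Continuous η ∧ 0 < η p ∧
      ∀ ε > 0, IsStrictJacobiSupersolution k (fun r => w r + ε * η r) I := by
  set μ := √(3 * |K| + 1)
  have hμ : μ ^ 2 = 3 * |K| + 1 := Real.sq_sqrt (by positivity)
  set C := fun r => Real.cosh (μ * (r - p))
  have hη (r : ℝ) : HasSecondDerivAt (fun r => 2 - C r) (-(μ ^ 2 * C r)) r := by
    simpa only [zero_sub] using (HasSecondDerivAt.const 2).sub (hasSecondDerivAt_cosh μ p r)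
  refine ⟨fun r => 2 - C r, by fun_prop, by norm_num [C], fun ε hε => ⟨_,
    hw.add_hasSecondDerivAt fun r _ => (hη r).const_mul ε, fun r hr => ?_⟩⟩
  have hC : 1 ≤ C r := Real.one_le_cosh _
  have hstrict : -(μ ^ 2 * C r) + k r * (2 - C r) < 0 := by
    have hkK := abs_le.1 ((hk r hr).trans (le_abs_self K))
    rw [hμ]
    nlinarith [abs_nonneg K]
  linarith [mul_neg_of_pos_of_neg hε hstrict]

lemma IsJacobiSupersolution.sub_solution {k w q : ℝ → ℝ} {I : Set ℝ}
    (hw : IsJacobiSupersolution k w I) (hq : IsJacobiSolution k q I) :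
    IsJacobiSupersolution k (fun r => w r - q r) I := by
  have h := hw.add_hasSecondDerivAt fun z hz => (hq z hz).const_mul (-1)
  intro z hz ψ c hψ hmin
  have := h z hz ψ c hψ (by simpa only [neg_one_mul, ← sub_eq_add_neg] using hmin)
  linarith

lemma IsJacobiSolution.combination {k h₁ h₂ : ℝ → ℝ} {I : Set ℝ} (hh₁ : IsJacobiSolution k h₁ I)
    (hh₂ : IsJacobiSolution k h₂ I) (a b : ℝ) :
    IsJacobiSolution k (fun r => a * h₁ r + b * h₂ r) I := fun z hz => by
  convert ((hh₁ z hz).const_mul a).add ((hh₂ z hz).const_mul b) using 1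
  ring

-- At a local minimum of `w / h` with value `c`, the solution `c h` touches `w` from below.
lemma IsStrictJacobiSupersolution.not_isLocalMin_div {k w h : ℝ → ℝ} {I : Set ℝ} {z : ℝ}
    (hw : IsStrictJacobiSupersolution k w I) (hh : IsJacobiSolution k h I) (hz : z ∈ I)
    (hpos : 0 < h z) : ¬ IsLocalMin (fun r => w r / h r) z := by
  obtain ⟨F, hF, hlt⟩ := hw
  intro hmin
  have hcontact : w z / h z * h z = w z := div_mul_cancel₀ _ hpos.ne'
  have htouch : IsLocalMin (fun r => w r - w z / h z * h r) z := by
    filter_upwards [hmin, (hh z hz).differentiableAt.continuousAt.eventually_const_lt hpos]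
      with r hr hr_pos
    have := (le_div_iff₀ hr_pos).1 hr
    linarith
  have hle := hF z hz _ _ ((hh z hz).const_mul (w z / h z)) htouch
  have : w z / h z * -(k z * h z) = -(k z * w z) := by linear_combination -(k z) * hcontact
  linarith [hlt z hz]

section Interval

variable {k w h : ℝ → ℝ} {α β K : ℝ}

lemma IsStrictJacobiSupersolution.min_div_le (hw : IsStrictJacobiSupersolution k w (Ioo α β))
    (hwc : ContinuousOn w (Icc α β)) (hh : IsJacobiSolution k h (Ioo α β))
    (hhc : ContinuousOn h (Icc α β)) (hpos : ∀ r ∈ Icc α β, 0 < h r) {z : ℝ}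
    (hz : z ∈ Icc α β) : min (w α / h α) (w β / h β) ≤ w z / h z := by
  by_contra! hlt
  obtain ⟨hα, hβ⟩ := lt_min_iff.1 hlt
  have hends : ∀ r ∈ Icc α β \ Ioo α β, w z / h z < w r / h r := by
    rw [Icc_sdiff_Ioo_same (hz.1.trans hz.2)]
    rintro r (rfl | rfl) <;> assumption
  obtain ⟨y, hy, hmin⟩ := isCompact_Icc.exists_isLocalMin_mem_open Ioo_subset_Icc_self
    (hwc.div hhc fun r hr => (hpos r hr).ne') hz hends isOpen_Ioo
  exact hw.not_isLocalMin_div hh hy (hpos y (Ioo_subset_Icc_self hy)) hmin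

lemma IsJacobiSupersolution.nonneg_of_endpoints (hw : IsJacobiSupersolution k w (Ioo α β))
    (hk : ∀ r ∈ Ioo α β, |k r| ≤ K) (hwc : ContinuousOn w (Icc α β))
    (hh : IsJacobiSolution k h (Ioo α β)) (hhc : ContinuousOn h (Icc α β))
    (hpos : ∀ r ∈ Icc α β, 0 < h r) (hα : 0 ≤ w α) (hβ : 0 ≤ w β) {z : ℝ}
    (hz : z ∈ Icc α β) : 0 ≤ w z := by
  obtain ⟨η, hη, -, hstrict⟩ := hw.exists_strict_perturbation hk α
  have hαβ : α ≤ β := hz.1.trans hz.2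
  set quotient := fun r ε : ℝ => (w r + ε * η r) / h r
  have htendsto (r : ℝ) : Tendsto (quotient r) (𝓝[>] 0) (𝓝 (w r / h r)) :=
    ((by fun_prop : Continuous (quotient r)).tendsto' 0 _ (by simp [quotient])).mono_left
      nhdsWithin_le_nhds
  have hle : min (w α / h α) (w β / h β) ≤ w z / h z := by
    refine le_of_tendsto_of_tendsto ((htendsto α).min (htendsto β)) (htendsto z) ?_
    filter_upwards [self_mem_nhdsWithin] with ε hε
    exact (hstrict ε hε).min_div_le (hwc.add (by fun_prop)) hh hhc hpos hz
  have hmin : 0 ≤ min (w α / h α) (w β / h β) :=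
    le_min (div_nonneg hα (hpos α (left_mem_Icc.2 hαβ)).le)
      (div_nonneg hβ (hpos β (right_mem_Icc.2 hαβ)).le)
  simpa using (le_div_iff₀ (hpos z hz)).1 (hmin.trans hle)

-- Otherwise `w / h` would tend to `+∞` at both ends and attain a minimum inside.
lemma IsStrictJacobiSupersolution.not_pos_endpoints
    (hw : IsStrictJacobiSupersolution k w (Ioo α β)) (hαβ : α < β)
    (hwc : ContinuousOn w (Icc α β)) (hh : IsJacobiSolution k h (Ioo α β))
    (hhc : ContinuousOn h (Icc α β)) (hpos : ∀ r ∈ Ioo α β, 0 < h r)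
    (hα : h α = 0) (hβ : h β = 0) : ¬ (0 < w α ∧ 0 < w β) := by
  rintro ⟨hwα, hwβ⟩
  obtain ⟨m, hm⟩ := nonempty_Ioo.2 hαβ
  have hlarge {e : ℝ} (he : e ∈ Icc α β) (hhe : h e = 0) (hwe : 0 < w e) {J : Set ℝ}
      (hJ : J ⊆ Ioo α β) [(𝓝[J] e).NeBot] : ∃ r ∈ J, w m / h m < w r / h r := by
    have hcont : Tendsto (fun r => w r - w m / h m * h r) (𝓝[J] e) (𝓝 (w e)) := by
      have := ((hwc.fun_sub (hhc.const_mul (w m / h m))) e he).mono (hJ.trans Ioo_subset_Icc_self)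
      simpa only [hhe, mul_zero, sub_zero] using this.tendsto
    obtain ⟨r, hr_pos, hr⟩ :=
      ((hcont.eventually_const_lt hwe).and self_mem_nhdsWithin).exists
    exact ⟨r, hr, (lt_div_iff₀ (hpos r (hJ hr))).2 (sub_pos.1 hr_pos)⟩
  have := left_nhdsWithin_Ioo_neBot hm.1
  have := right_nhdsWithin_Ioo_neBot hm.2
  obtain ⟨α', hα', hltα⟩ := hlarge (left_mem_Icc.2 hαβ.le) hα hwα (Ioo_subset_Ioo_right hm.2.le)
  obtain ⟨β', hβ', hltβ⟩ := hlarge (right_mem_Icc.2 hαβ.le) hβ hwβ (Ioo_subset_Ioo_left hm.1.le)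
  have hsub : Icc α' β' ⊆ Ioo α β := Icc_subset_Ioo hα'.1 hβ'.2
  have hsub' : Icc α' β' ⊆ Icc α β := hsub.trans Ioo_subset_Icc_self
  have hsubIoo : Ioo α' β' ⊆ Ioo α β := Ioo_subset_Icc_self.trans hsub
  exact ((hw.mono hsubIoo).min_div_le (hwc.mono hsub') (fun r hr => hh r (hsubIoo hr))
    (hhc.mono hsub') (fun r hr => hpos r (hsub hr)) ⟨hα'.2.le, hβ'.1.le⟩).not_gt
      (lt_min hltα hltβ)

lemma IsJacobiSupersolution.endpoints_eq_zero (hw : IsJacobiSupersolution k w (Ioo α β))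
    (hk : ∀ r ∈ Ioo α β, |k r| ≤ K) (hαβ : α < β) (hwc : ContinuousOn w (Icc α β))
    (hwα : 0 ≤ w α) (hwβ : 0 ≤ w β) (hh : IsJacobiSolution k h (Ioo α β))
    (hhc : ContinuousOn h (Icc α β)) (hpos : ∀ r ∈ Ioo α β, 0 < h r)
    (hα : h α = 0) (hβ : h β = 0) : w α = 0 ∧ w β = 0 := by
  have hperturb {e e' : ℝ} (he : 0 < w e) (he' : 0 ≤ w e') :
      ∃ η : ℝ → ℝ, Continuous η ∧ 0 < w e + η e ∧ 0 < w e' + η e' ∧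
        IsStrictJacobiSupersolution k (fun r => w r + η r) (Ioo α β) := by
    obtain ⟨η, hη, hηe', hstrict⟩ := hw.exists_strict_perturbation hk e'
    have htendsto : Tendsto (fun ε => w e + ε * η e) (𝓝[>] 0) (𝓝 (w e)) :=
      ((by fun_prop : Continuous fun ε => w e + ε * η e).tendsto' 0 _ (by simp)).mono_left
        nhdsWithin_le_nhds
    obtain ⟨ε, hεe, hε : 0 < ε⟩ :=
      ((htendsto.eventually_const_lt he).and self_mem_nhdsWithin).exists
    exact ⟨fun r => ε * η r, by fun_prop, hεe, by positivity, hstrict ε hε⟩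
  constructor
  · by_contra hne
    obtain ⟨η, hη, hα', hβ', hstrict⟩ := hperturb (hwα.lt_of_ne' hne) hwβ
    exact hstrict.not_pos_endpoints hαβ (hwc.add hη.continuousOn) hh hhc hpos hα hβ ⟨hα', hβ'⟩
  · by_contra hne
    obtain ⟨η, hη, hβ', hα', hstrict⟩ := hperturb (hwβ.lt_of_ne' hne) hwα
    exact hstrict.not_pos_endpoints hαβ (hwc.add hη.continuousOn) hh hhc hpos hα hβ ⟨hα', hβ'⟩

-- Strong minimum principle: `δ (cosh (μ (r - α)) - 1)` is a barrier from below.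
lemma IsJacobiSupersolution.right_eq_zero_of_eq_zero
    (hw : IsJacobiSupersolution k w (Ioo α β)) (hk : ∀ r ∈ Ioo α β, |k r| ≤ K)
    (hwc : ContinuousOn w (Icc α β)) (hnonneg : ∀ r ∈ Icc α β, 0 ≤ w r) {z : ℝ}
    (hz : z ∈ Ioo α β) (hwz : w z = 0) : w β = 0 := by
  have hαβ : α < β := hz.1.trans hz.2
  have hβ_mem : β ∈ Icc α β := right_mem_Icc.2 hαβ.le
  by_contra hne
  set μ := √(|K| + 1)
  have hμ : μ ^ 2 = |K| + 1 := Real.sq_sqrt (by positivity)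
  set q := fun r => Real.cosh (μ * (r - α)) - 1
  have hq (r : ℝ) : HasSecondDerivAt q (μ ^ 2 * (q r + 1)) r := by
    simpa [q] using (hasSecondDerivAt_cosh μ α r).sub (HasSecondDerivAt.const 1)
  have hq_pos {r : ℝ} (hr : α < r) : 0 < q r := by
    have : μ * (r - α) ≠ 0 := mul_ne_zero (by positivity) (sub_ne_zero.2 hr.ne')
    simpa [q] using this
  set δ := w β / q β
  have hδ : 0 < δ := div_pos ((hnonneg β hβ_mem).lt_of_ne' hne) (hq_pos hαβ)
  have hz_neg : w z - δ * q z < 0 := by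
    rw [hwz, zero_sub, neg_lt_zero]
    exact mul_pos hδ (hq_pos hz.1)
  have hends : ∀ r ∈ Icc α β \ Ioo α β, w z - δ * q z < w r - δ * q r := by
    rw [Icc_sdiff_Ioo_same hαβ.le]
    rintro r (rfl | rfl)
    · simpa [q] using hz_neg.trans_le (hnonneg r (left_mem_Icc.2 hαβ.le))
    · simpa [δ, div_mul_cancel₀ _ (hq_pos hαβ).ne'] using hz_neg
  obtain ⟨y, hy, hmin⟩ := isCompact_Icc.exists_isMinOn_mem_subset
    (f := fun r => w r - δ * q r) (hwc.sub (by fun_prop)) (Ioo_subset_Icc_self hz) hends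
  have hy_neg : w y - δ * q y < 0 := (hmin (Ioo_subset_Icc_self hz)).trans_lt hz_neg
  have hcurv : δ * (μ ^ 2 * (q y + 1)) ≤ -(k y * w y) :=
    hw y hy _ _ ((hq y).const_mul δ) (hmin.isLocalMin (Icc_mem_nhds hy.1 hy.2))
  have hbound : -(k y * w y) ≤ |K| * (δ * q y) := calc
    -(k y * w y) ≤ |k y| * w y := by
      nlinarith [neg_abs_le (k y), hnonneg y (Ioo_subset_Icc_self hy)]
    _ ≤ |K| * (δ * q y) := mul_le_mul ((hk y hy).trans (le_abs_self K)) (by linarith)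
      (hnonneg y (Ioo_subset_Icc_self hy)) (abs_nonneg K)
  rw [hμ] at hcurv
  nlinarith [abs_nonneg K, mul_pos hδ (hq_pos hy.1), mul_nonneg (abs_nonneg K) hδ.le]

end Interval

namespace IsSinSolution

variable {k s s' : ℝ → ℝ} {θ : ℝ}

lemma continuousOn (hs : IsSinSolution k s s' θ) : ContinuousOn s (Icc 0 θ) :=
  fun r hr => (hs.2.2 r hr).1.continuousAt.continuousWithinAt

lemma isJacobiSolution (hs : IsSinSolution k s s' θ) : IsJacobiSolution k s (Ioo 0 θ) := by
  refine fun r hr => ⟨s', ?_, (hs.2.2 r (Ioo_subset_Icc_self hr)).2⟩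
  filter_upwards [Icc_mem_nhds hr.1 hr.2] with y hy using (hs.2.2 y hy).1

lemma isJacobiSolution_reflect (hs : IsSinSolution (fun r => k (θ - r)) s s' θ) :
    IsJacobiSolution k (fun r => s (θ - r)) (Ioo 0 θ) := by
  intro r hr
  have hr' : θ + (-1) * r = θ - r := by ring
  have hsol : HasSecondDerivAt s (-(k r * s (θ - r))) (θ - r) := by
    simpa only [sub_sub_cancel] using
      hs.isJacobiSolution (θ - r) ⟨by linarith [hr.2], by linarith [hr.1]⟩
  simpa [← sub_eq_add_neg] using HasSecondDerivAt.comp_affine θ (-1) (by rwa [hr'])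

lemma eventually_pos (hs : IsSinSolution k s s' θ) (hθ : 0 ≤ θ) : ∀ᶠ r in 𝓝[>] 0, 0 < s r := by
  have hderiv : 0 < deriv s 0 := by
    rw [(hs.2.2 0 (left_mem_Icc.2 hθ)).1.deriv, hs.2.1]
    exact one_pos
  filter_upwards [nhdsWithin_le_nhds (eventually_nhdsWithin_sign_eq_of_deriv_pos hderiv hs.1),
    self_mem_nhdsWithin] with r hsign hr
  rw [sub_zero, sign_pos (mem_Ioi.1 hr)] at hsign
  exact sign_eq_one_iff.1 hsign

lemma exists_first_zero (hs : IsSinSolution k s s' θ) (hn : ¬ ∀ r ∈ Ioc (0 : ℝ) θ, 0 < s r) :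
    ∃ z ∈ Ioc 0 θ, s z = 0 ∧ ∀ r ∈ Ioo 0 z, 0 < s r := by
  push Not at hn
  obtain ⟨t, ht, hst⟩ := hn
  obtain ⟨ρ, hρ : 0 < ρ, hρ_pos⟩ :=
    mem_nhdsGT_iff_exists_Ioc_subset.1 (hs.eventually_pos (ht.1.le.trans ht.2))
  have hρt : ρ < t := lt_of_not_ge fun h => (hρ_pos ⟨ht.1, h⟩ : 0 < s t).not_ge hst
  have hcont : ContinuousOn s (Icc ρ t) := hs.continuousOn.mono (Icc_subset_Icc hρ.le ht.2)
  have hzero {r : ℝ} (hr : r ∈ Icc ρ t) (hsr : s r ≤ 0) : ∃ z ∈ Icc ρ r, s z = 0 :=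
    intermediate_value_Icc' hr.1 (hcont.mono (Icc_subset_Icc_right hr.2))
      ⟨hsr, (hρ_pos ⟨hρ, le_rfl⟩ : 0 < s ρ).le⟩
  have hcompact : IsCompact (Icc ρ t ∩ s ⁻¹' {0}) := isCompact_Icc.of_isClosed_subset
    (hcont.preimage_isClosed_of_isClosed isClosed_Icc isClosed_singleton) inter_subset_left
  obtain ⟨z, ⟨hz, hsz⟩, hleast⟩ :=
    hcompact.exists_isLeast (hzero (right_mem_Icc.2 hρt.le) hst)
  refine ⟨z, ⟨hρ.trans_le hz.1, hz.2.trans ht.2⟩, hsz, fun r hr => ?_⟩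
  rcases le_or_gt r ρ with hrρ | hρr
  · exact hρ_pos ⟨hr.1, hrρ⟩
  · by_contra! hsr
    obtain ⟨y, hy, hsy⟩ := hzero ⟨hρr.le, hr.2.le.trans hz.2⟩ hsr
    exact (hleast ⟨⟨hy.1, hy.2.trans (hr.2.le.trans hz.2)⟩, hsy⟩).not_gt (hy.2.trans_lt hr.2)

lemma nonneg (hs : IsSinSolution k s s' θ) (hpos : ∀ r ∈ Ioc (0 : ℝ) θ, 0 < s r) {r : ℝ}
    (hr : r ∈ Icc 0 θ) : 0 ≤ s r := by
  rcases hr.1.eq_or_lt with rfl | hr0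
  · exact hs.1.ge
  · exact (hpos r ⟨hr0, hr.2⟩).le

lemma distortion_nonneg (hs : IsSinSolution k s s' θ) (hpos : ∀ r ∈ Ioc (0 : ℝ) θ, 0 < s r)
    (hθ : 0 ≤ θ) {t : ℝ} (ht : t ∈ Icc 0 1) : 0 ≤ s (t * θ) / s θ :=
  div_nonneg (hs.nonneg hpos ⟨mul_nonneg ht.1 hθ, mul_le_of_le_one_left hθ ht.2⟩)
    (hs.nonneg hpos (right_mem_Icc.2 hθ))

end IsSinSolution

section Comparison

variable {k U s s' m m' : ℝ → ℝ} {θ K : ℝ}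

lemma IsJacobiSupersolution.endpoints_eq_zero_of_conjugate
    (hU : IsJacobiSupersolution k U (Ioo 0 θ)) (hk : ∀ r ∈ Ioo 0 θ, |k r| ≤ K)
    (hUc : ContinuousOn U (Icc 0 θ)) (hnonneg : ∀ r ∈ Icc 0 θ, 0 ≤ U r)
    (hs : IsSinSolution k s s' θ) (hn : ¬ ∀ r ∈ Ioc (0 : ℝ) θ, 0 < s r) :
    U 0 = 0 ∧ U θ = 0 := by
  obtain ⟨z, hz, hsz, hpos⟩ := hs.exists_first_zero hn
  have hIcc : Icc 0 z ⊆ Icc 0 θ := Icc_subset_Icc_right hz.2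
  have hIoo : Ioo 0 z ⊆ Ioo 0 θ := Ioo_subset_Ioo_right hz.2
  obtain ⟨hU₀, hUz⟩ := IsJacobiSupersolution.endpoints_eq_zero (hU.mono hIoo)
    (fun r hr => hk r (hIoo hr)) hz.1 (hUc.mono hIcc) (hnonneg 0 (hIcc (left_mem_Icc.2 hz.1.le)))
    (hnonneg z (hIcc (right_mem_Icc.2 hz.1.le))) (fun r hr => hs.isJacobiSolution r (hIoo hr))
    (hs.continuousOn.mono hIcc) hpos hs.1 hsz
  rcases hz.2.eq_or_lt with rfl | hzθ
  · exact ⟨hU₀, hUz⟩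
  · exact ⟨hU₀, hU.right_eq_zero_of_eq_zero hk hUc hnonneg ⟨hz.1, hzθ⟩ hUz⟩

lemma IsJacobiSupersolution.distortion_le (hθ : 0 < θ)
    (hU : IsJacobiSupersolution k U (Ioo 0 θ)) (hk : ∀ r ∈ Ioo 0 θ, |k r| ≤ K)
    (hUc : ContinuousOn U (Icc 0 θ)) (hs : IsSinSolution k s s' θ)
    (hm : IsSinSolution (fun r => k (θ - r)) m m' θ) (hs_pos : ∀ r ∈ Ioc (0 : ℝ) θ, 0 < s r)
    (hm_pos : ∀ r ∈ Ioc (0 : ℝ) θ, 0 < m r) {r : ℝ} (hr : r ∈ Icc 0 θ) :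
    m (θ - r) / m θ * U 0 + s r / s θ * U θ ≤ U r := by
  have hreflect : MapsTo (fun r => θ - r) (Icc 0 θ) (Icc 0 θ) :=
    fun r hr => ⟨by linarith [hr.2], by linarith [hr.1]⟩
  have hmc : ContinuousOn (fun r => m (θ - r)) (Icc 0 θ) :=
    hm.continuousOn.comp (by fun_prop) hreflect
  have hcomb (a b : ℝ) :
      IsJacobiSolution k (fun r => a * m (θ - r) + b * s r) (Ioo 0 θ) :=
    hm.isJacobiSolution_reflect.combination hs.isJacobiSolution a b
  have hcombc (a b : ℝ) : ContinuousOn (fun r => a * m (θ - r) + b * s r) (Icc 0 θ) :=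
    (hmc.const_mul a).add (hs.continuousOn.const_mul b)
  have hsum_pos : ∀ r ∈ Icc 0 θ, 0 < 1 * m (θ - r) + 1 * s r := by
    intro r hr
    rw [one_mul, one_mul]
    rcases hr.1.eq_or_lt with rfl | hr0
    · simpa [hs.1] using hm_pos θ ⟨hθ, le_rfl⟩
    · exact add_pos_of_nonneg_of_pos (hm.nonneg hm_pos (hreflect hr)) (hs_pos r ⟨hr0, hr.2⟩)
  have hmθ : m θ ≠ 0 := (hm_pos θ ⟨hθ, le_rfl⟩).ne'
  have hsθ : s θ ≠ 0 := (hs_pos θ ⟨hθ, le_rfl⟩).ne'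
  have hdiff := (hU.sub_solution (hcomb (U 0 / m θ) (U θ / s θ))).nonneg_of_endpoints hk
    (hUc.sub (hcombc _ _)) (hcomb 1 1) (hcombc 1 1) hsum_pos
    (by simp [hs.1, hmθ]) (by simp [hm.1, hsθ]) hr
  calc m (θ - r) / m θ * U 0 + s r / s θ * U θ
      = U 0 / m θ * m (θ - r) + U θ / s θ * s r := by ring
    _ ≤ U r := sub_nonneg.1 hdiff

end Comparison

namespace IsNonnegTestFunction

variable {φ : ℝ → ℝ} {a b : ℝ}

lemma eq_zero_and_deriv_eq_zero (hφ : IsNonnegTestFunction φ (Ioo a b)) {x : ℝ} (hx : x ∉ Ioo a b) :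
    φ x = 0 ∧ deriv φ x = 0 := by
  have hnot : x ∉ tsupport φ := fun h => hx (hφ.tsupport_subset h)
  exact ⟨image_eq_zero_of_notMem_tsupport hnot, by
    simpa using (notMem_tsupport_iff_eventuallyEq.1 hnot).deriv_eq⟩

lemma contDiff_deriv (hφ : IsNonnegTestFunction φ (Ioo a b)) :
    ContDiff ℝ (⊤ : ℕ∞) (deriv φ) :=
  (contDiff_infty_iff_deriv.1 hφ.contDiff).2

lemma continuous_deriv_deriv (hφ : IsNonnegTestFunction φ (Ioo a b)) :
    Continuous (deriv (deriv φ)) :=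
  hφ.contDiff_deriv.continuous_deriv (by exact_mod_cast le_top)

lemma integral_deriv_deriv_mul (hφ : IsNonnegTestFunction φ (Ioo a b)) {W W' F : ℝ → ℝ}
    (hW : ∀ x, HasDerivAt W (W' x) x) (hW' : ∀ x, HasDerivAt W' (F x) x) (hF : Continuous F) :
    ∫ x in a..b, deriv (deriv φ) x * W x = ∫ x in a..b, φ x * F x := by
  have hW'c : Continuous W' := continuous_iff_continuousAt.2 fun x => (hW' x).continuousAt
  have hφ' (x : ℝ) : HasDerivAt φ (deriv φ x) x :=
    (hφ.contDiff.differentiable (by simp) x).hasDerivAt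
  have hφ'' (x : ℝ) : HasDerivAt (deriv φ) (deriv (deriv φ) x) x :=
    (hφ.contDiff_deriv.differentiable (by simp) x).hasDerivAt
  have ha := hφ.eq_zero_and_deriv_eq_zero (x := a) (by simp)
  have hb := hφ.eq_zero_and_deriv_eq_zero (x := b) (by simp)
  have hfirst := intervalIntegral.integral_mul_deriv_eq_deriv_mul (a := a) (b := b)
    (fun x _ => hW x) (fun x _ => hφ'' x) (hW'c.intervalIntegrable _ _)
    (hφ.continuous_deriv_deriv.intervalIntegrable _ _)
  have hsecond := intervalIntegral.integral_mul_deriv_eq_deriv_mul (a := a) (b := b)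
    (fun x _ => hφ' x) (fun x _ => hW' x) (hφ.contDiff_deriv.continuous.intervalIntegrable _ _)
    (hF.intervalIntegrable _ _)
  rw [ha.2, hb.2] at hfirst
  rw [ha.1, hb.1] at hsecond
  simp only [mul_comm (deriv (deriv φ) _), hfirst, hsecond, mul_comm (W' _)]
  ring

end IsNonnegTestFunction

lemma exists_second_antiderivative {F : ℝ → ℝ} (hF : Continuous F) :
    ∃ W W' : ℝ → ℝ, (∀ x, HasDerivAt W (W' x) x) ∧ ∀ x, HasDerivAt W' (F x) x := by
  have hprimitive {G : ℝ → ℝ} (hG : Continuous G) (x : ℝ) :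
      HasDerivAt (fun t => ∫ r in (0 : ℝ)..t, G r) (G x) x :=
    (hG.integral_hasStrictDerivAt 0 x).hasDerivAt
  exact ⟨_, _, hprimitive (continuous_iff_continuousAt.2 fun x =>
    (hprimitive hF x).continuousAt), hprimitive hF⟩

section Mollification

variable {f g : ℝ → ℝ} {a b : ℝ}

lemma hasSecondDerivAt_convolution {ρ : ℝ → ℝ} (hρ : ContDiff ℝ (⊤ : ℕ∞) ρ)
    (hρc : HasCompactSupport ρ) (hf : LocallyIntegrable f) (x : ℝ) :
    HasSecondDerivAt (ρ ⋆[ContinuousLinearMap.lsmul ℝ ℝ, volume] f)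
      (∫ y, deriv (deriv fun y => ρ (x - y)) y * f y) x := by
  have hρ' : ContDiff ℝ (⊤ : ℕ∞) (deriv ρ) := (contDiff_infty_iff_deriv.1 hρ).2
  have hderiv : deriv (deriv fun y => ρ (x - y)) = fun y => deriv (deriv ρ) (x - y) := by
    rw [show (deriv fun y => ρ (x - y)) = fun y => -deriv ρ (x - y) from
      funext fun y => deriv_comp_const_sub ρ x y]
    ext y
    rw [deriv.fun_neg, deriv_comp_const_sub, neg_neg]
  have hsecond := hρc.deriv.hasDerivAt_convolution_left (ContinuousLinearMap.lsmul ℝ ℝ)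
    (hρ'.of_le (by exact_mod_cast le_top)) hf x
  rw [convolution_lsmul_swap] at hsecond
  exact ⟨_, .of_forall fun y => hρc.hasDerivAt_convolution_left _
    (hρ.of_le (by exact_mod_cast le_top)) hf y, by simpa only [hderiv, smul_eq_mul] using hsecond⟩

lemma isNonnegTestFunction_normed_sub (φ : ContDiffBump (0 : ℝ)) {x : ℝ} {I : Set ℝ}
    (hx : Metric.closedBall x φ.rOut ⊆ I) :
    IsNonnegTestFunction (fun y => φ.normed volume (x - y)) I := by
  have htsupport : tsupport (fun y => φ.normed volume (x - y)) ⊆ Metric.closedBall x φ.rOut := by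
    refine closure_minimal (fun y hy => ?_) Metric.isClosed_closedBall
    have hmem : x - y ∈ Metric.ball 0 φ.rOut := φ.support_normed_eq (μ := volume) ▸ hy
    simpa [Real.dist_eq, abs_sub_comm] using (Metric.mem_ball.1 hmem).le
  exact {
    contDiff := φ.contDiff_normed.comp (contDiff_const.sub contDiff_id)
    hasCompactSupport := HasCompactSupport.of_support_subset_isCompact (isCompact_closedBall x _)
      (subset_closure.trans htsupport)
    tsupport_subset := htsupport.trans hx
    nonneg := fun y => φ.nonneg_normed _ }

lemma IsNonnegTestFunction.integral_deriv_deriv_mul_eq_intervalIntegral {φ : ℝ → ℝ}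
    (hφ : IsNonnegTestFunction φ (Ioo a b)) (f : ℝ → ℝ) :
    ∫ x, deriv (deriv φ) x * f x = ∫ x in a..b, deriv (deriv φ) x * f x := by
  refine (intervalIntegral.integral_eq_integral_of_support_subset fun x hx => ?_).symm
  have hmem : x ∈ tsupport (deriv (deriv φ)) := subset_closure (left_ne_zero_of_mul hx)
  exact Ioo_subset_Ioc_self (hφ.tsupport_subset
    (tsupport_deriv_subset (tsupport_deriv_subset hmem)))

lemma concaveOn_normed_convolution (hf : LocallyIntegrable f)
    (h : ∀ φ, IsNonnegTestFunction φ (Ioo a b) → ∫ x in a..b, deriv (deriv φ) x * f x ≤ 0)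
    (φ : ContDiffBump (0 : ℝ)) :
    ConcaveOn ℝ (Ioo (a + φ.rOut) (b - φ.rOut))
      (φ.normed volume ⋆[ContinuousLinearMap.lsmul ℝ ℝ, volume] f) := by
  refine concaveOn_of_hasSecondDerivAt_nonpos (convex_Ioo _ _)
    (fun x _ => hasSecondDerivAt_convolution φ.contDiff_normed φ.hasCompactSupport_normed hf x)
    fun x hx => ?_
  have hball : Metric.closedBall x φ.rOut ⊆ Ioo a b := by
    rw [Real.closedBall_eq_Icc]
    exact Icc_subset_Ioo (by linarith [hx.1]) (by linarith [hx.2])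
  have htest := isNonnegTestFunction_normed_sub φ hball
  exact (htest.integral_deriv_deriv_mul_eq_intervalIntegral f).trans_le (h _ htest)

lemma concaveOn_of_integral_deriv_deriv_mul_nonpos (hf : Continuous f)
    (h : ∀ φ, IsNonnegTestFunction φ (Ioo a b) → ∫ x in a..b, deriv (deriv φ) x * f x ≤ 0) :
    ConcaveOn ℝ (Ioo a b) f := by
  refine ⟨convex_Ioo a b, fun x hx y hy p q hp hq hpq => ?_⟩
  let φ (n : ℕ) : ContDiffBump (0 : ℝ) :=
    ⟨1 / (n + 1) / 2, 1 / (n + 1), by positivity, half_lt_self (by positivity)⟩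
  have hradius : Tendsto (fun n => (φ n).rOut) atTop (𝓝 0) :=
    tendsto_one_div_add_atTop_nhds_zero_nat
  have hlim (z : ℝ) := ContDiffBump.convolution_tendsto_right_of_continuous
    (μ := volume) hradius hf z
  have hmem {z : ℝ} (hz : z ∈ Ioo a b) :
      ∀ᶠ n in atTop, z ∈ Ioo (a + (φ n).rOut) (b - (φ n).rOut) := by
    filter_upwards [hradius.eventually_lt_const (sub_pos.2 hz.1),
      hradius.eventually_lt_const (sub_pos.2 hz.2)] with n h₁ h₂
    exact ⟨by linarith, by linarith⟩
  refine le_of_tendsto_of_tendsto (((hlim x).const_smul p).add ((hlim y).const_smul q))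
    (hlim (p • x + q • y)) ?_
  filter_upwards [hmem hx, hmem hy] with n hxn hyn
  exact (concaveOn_normed_convolution hf.locallyIntegrable h (φ n)).2 hxn hyn hp hq hpq

end Mollification

lemma exists_continuous_eqOn_Icc {f : ℝ → ℝ} {a b : ℝ} (hab : a ≤ b)
    (hf : ContinuousOn f (Icc a b)) : ∃ g, Continuous g ∧ EqOn g f (Icc a b) :=
  ⟨IccExtend hab ((Icc a b).domRestrict f), hf.domRestrict.Icc_extend',
    fun _ hx => IccExtend_of_mem hab _ hx⟩

-- With `W'' = κ u`, the inequality says that `u + W` is concave in the sense of distributions.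
lemma isJacobiSupersolution_of_distributional {κ u : ℝ → ℝ} {a b : ℝ} (hab : a ≤ b)
    (hκ : ContinuousOn κ (Icc a b)) (hu : ContinuousOn u (Icc a b))
    (hdist : ∀ φ, IsNonnegTestFunction φ (Ioo a b) →
      ∫ x in a..b, deriv (deriv φ) x * u x ≤ -∫ x in a..b, φ x * κ x * u x) :
    IsJacobiSupersolution κ u (Ioo a b) := by
  obtain ⟨v, hv, hvu⟩ := exists_continuous_eqOn_Icc hab hu
  obtain ⟨F, hF, hFκu⟩ := exists_continuous_eqOn_Icc hab (hκ.mul hu)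
  obtain ⟨W, W', hW, hW'⟩ := exists_second_antiderivative hF
  have hWc : Continuous W := continuous_iff_continuousAt.2 fun x => (hW x).continuousAt
  have hconcave : ConcaveOn ℝ (Ioo a b) (fun x => v x + W x) := by
    refine concaveOn_of_integral_deriv_deriv_mul_nonpos (hv.add hWc) fun φ hφ => ?_
    have hφ'' := hφ.continuous_deriv_deriv
    calc ∫ x in a..b, deriv (deriv φ) x * (v x + W x)
        = (∫ x in a..b, deriv (deriv φ) x * v x) + ∫ x in a..b, deriv (deriv φ) x * W x := by
          simp only [mul_add]
          exact intervalIntegral.integral_add ((hφ''.mul hv).intervalIntegrable _ _)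
            ((hφ''.mul hWc).intervalIntegrable _ _)
      _ = (∫ x in a..b, deriv (deriv φ) x * u x) + ∫ x in a..b, φ x * κ x * u x := by
          rw [hφ.integral_deriv_deriv_mul hW hW' hF]
          congr 1 <;> refine intervalIntegral.integral_congr fun x hx => ?_ <;>
            rw [uIcc_of_le hab] at hx
          · simp only [hvu hx]
          · simp only [hFκu hx, mul_assoc, Pi.mul_apply]
      _ ≤ 0 := by linarith [hdist φ hφ]
  have hneg (x : ℝ) : HasSecondDerivAt (fun x => -1 * W x) (-1 * F x) x :=
    HasSecondDerivAt.const_mul (-1) ⟨W', .of_forall hW, hW' x⟩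
  refine ((viscositySecondDerivLE_zero_of_concaveOn isOpen_Ioo hconcave).add_hasSecondDerivAt
    fun x _ => hneg x).congr isOpen_Ioo (fun x hx => ?_) fun x hx => ?_
  · simp [hvu (Ioo_subset_Icc_self hx)]
  · simp [hFκu (Ioo_subset_Icc_self hx)]

section Segment

lemma continuous_unitSpeedSegment (x y : ℝ) : Continuous (unitSpeedSegment x y) := by
  unfold unitSpeedSegment
  fun_prop

lemma unitSpeedSegment_zero (x y : ℝ) : unitSpeedSegment x y 0 = x := by
  simp [unitSpeedSegment]

lemma unitSpeedSegment_swap (x y r : ℝ) :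
    unitSpeedSegment y x r = x + (1 - r / |y - x|) * (y - x) := by
  rw [unitSpeedSegment, abs_sub_comm]
  ring

variable {x y : ℝ}

lemma unitSpeedSegment_mul (hxy : x ≠ y) (t : ℝ) :
    unitSpeedSegment x y (t * |y - x|) = x + t * (y - x) := by
  rw [unitSpeedSegment, mul_div_cancel_right₀ _ (abs_ne_zero.2 (sub_ne_zero.2 hxy.symm))]

lemma unitSpeedSegment_abs_sub (hxy : x ≠ y) : unitSpeedSegment x y |y - x| = y := by
  simpa using unitSpeedSegment_mul hxy 1

lemma unitSpeedSegment_reflect (hxy : x ≠ y) (r : ℝ) :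
    unitSpeedSegment x y (|y - x| - r) = unitSpeedSegment y x r := by
  rw [unitSpeedSegment_swap x y, unitSpeedSegment, sub_div,
    div_self (abs_ne_zero.2 (sub_ne_zero.2 hxy.symm))]

lemma mapsTo_unitSpeedSegment_of_convex {I : Set ℝ} (hI : Convex ℝ I) (hx : x ∈ I) (hy : y ∈ I) :
    MapsTo (unitSpeedSegment x y) (Icc 0 |y - x|) I := fun _ hr =>
  hI.add_smul_sub_mem hx hy
    ⟨div_nonneg hr.1 (abs_nonneg _), div_le_one_of_le₀ hr.2 (abs_nonneg _)⟩

lemma mapsTo_unitSpeedSegment_Ioo {a b : ℝ} (hx : x ∈ Icc a b) (hy : y ∈ Icc a b) :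
    MapsTo (unitSpeedSegment x y) (Ioo 0 |y - x|) (Ioo a b) := by
  intro r hr
  have hθ : 0 < |y - x| := hr.1.trans hr.2
  have hxy : x ≠ y := (sub_ne_zero.1 (abs_pos.1 hθ)).symm
  have hmem : unitSpeedSegment x y r ∈ openSegment ℝ x y := by
    rw [openSegment_eq_image']
    exact ⟨r / |y - x|, ⟨div_pos hr.1 hθ, (div_lt_one hθ).2 hr.2⟩, rfl⟩
  rw [openSegment_eq_Ioo' hxy] at hmem
  exact Ioo_subset_Ioo (le_min hx.1 hy.1) (max_le hx.2 hy.2) hmem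

lemma IsJacobiSupersolution.comp_unitSpeedSegment {κ u : ℝ → ℝ} {a b : ℝ}
    (hw : IsJacobiSupersolution κ u (Ioo a b)) (hx : x ∈ Icc a b) (hy : y ∈ Icc a b)
    (hxy : x ≠ y) :
    IsJacobiSupersolution (κ ∘ unitSpeedSegment x y) (u ∘ unitSpeedSegment x y)
      (Ioo 0 |y - x|) := by
  have haffine : unitSpeedSegment x y = fun r => x + (y - x) / |y - x| * r := by
    ext r
    rw [unitSpeedSegment, div_mul_comm]
  have hspeed : ((y - x) / |y - x|) ^ 2 = 1 := by
    rw [div_pow, sq_abs, div_self (pow_ne_zero 2 (sub_ne_zero.2 hxy.symm))]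
  have hmaps := mapsTo_unitSpeedSegment_Ioo hx hy
  rw [haffine] at hmaps ⊢
  exact ViscositySecondDerivLE.comp_affine hw hspeed hmaps

variable {κ u s s' m m' : ℝ → ℝ} {a b K : ℝ}

lemma IsJacobiSupersolution.eq_zero_of_conjugate_segment
    (hu : IsJacobiSupersolution κ u (Ioo a b)) (hκ : ∀ z ∈ Icc a b, |κ z| ≤ K)
    (huc : ContinuousOn u (Icc a b)) (hnonneg : ∀ z ∈ Icc a b, 0 ≤ u z)
    (hx : x ∈ Icc a b) (hy : y ∈ Icc a b) (hxy : x ≠ y)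
    (hs : IsSinSolution (fun r => κ (unitSpeedSegment x y r)) s s' |y - x|)
    (hn : ¬ ∀ r ∈ Ioc (0 : ℝ) |y - x|, 0 < s r) : u x = 0 ∧ u y = 0 := by
  have hmaps := mapsTo_unitSpeedSegment_of_convex (convex_Icc a b) hx hy
  have hzero := (hu.comp_unitSpeedSegment hx hy hxy).endpoints_eq_zero_of_conjugate
    (fun r hr => hκ _ (hmaps (Ioo_subset_Icc_self hr)))
    (huc.comp (continuous_unitSpeedSegment x y).continuousOn hmaps)
    (fun r hr => hnonneg _ (hmaps hr)) hs hn
  simpa only [Function.comp_apply, unitSpeedSegment_zero, unitSpeedSegment_abs_sub hxy] using hzero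

lemma IsJacobiSupersolution.distortion_le_segment
    (hu : IsJacobiSupersolution κ u (Ioo a b)) (hκ : ∀ z ∈ Icc a b, |κ z| ≤ K)
    (huc : ContinuousOn u (Icc a b)) (hx : x ∈ Icc a b) (hy : y ∈ Icc a b) (hxy : x ≠ y)
    (hs : IsSinSolution (fun r => κ (unitSpeedSegment x y r)) s s' |y - x|)
    (hm : IsSinSolution (fun r => κ (unitSpeedSegment y x r)) m m' |y - x|)
    (hs_pos : ∀ r ∈ Ioc (0 : ℝ) |y - x|, 0 < s r) (hm_pos : ∀ r ∈ Ioc (0 : ℝ) |y - x|, 0 < m r)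
    {t : ℝ} (ht : t ∈ Icc 0 1) :
    m ((1 - t) * |y - x|) / m |y - x| * u x + s (t * |y - x|) / s |y - x| * u y ≤
      u (x + t * (y - x)) := by
  have hθ : 0 < |y - x| := abs_sub_pos.2 hxy.symm
  have hmaps := mapsTo_unitSpeedSegment_of_convex (convex_Icc a b) hx hy
  simp only [← unitSpeedSegment_reflect hxy] at hm
  have hr : t * |y - x| ∈ Icc 0 |y - x| :=
    ⟨mul_nonneg ht.1 hθ.le, mul_le_of_le_one_left hθ.le ht.2⟩
  have hle := (hu.comp_unitSpeedSegment hx hy hxy).distortion_le hθ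
    (fun r hr => hκ _ (hmaps (Ioo_subset_Icc_self hr)))
    (huc.comp (continuous_unitSpeedSegment x y).continuousOn hmaps) hs hm hs_pos hm_pos hr
  simpa only [Function.comp_apply, unitSpeedSegment_zero, unitSpeedSegment_abs_sub hxy,
    unitSpeedSegment_mul hxy, one_sub_mul] using hle

end Segment

lemma ofReal_mul_add_ofReal_mul {p q c d : ℝ} (hp : 0 ≤ p) (hq : 0 ≤ q) (hc : 0 ≤ c)
    (hd : 0 ≤ d) : ENNReal.ofReal p * ENNReal.ofReal c + ENNReal.ofReal q * ENNReal.ofReal d =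
      ENNReal.ofReal (p * c + q * d) := by
  rw [ENNReal.ofReal_add (by positivity) (by positivity), ENNReal.ofReal_mul hp,
    ENNReal.ofReal_mul hq]

end

open Classical in
/-- If `u'' + κu ≤ 0` distributionally, then along any constant speed geodesic
`γ(t) = x + t(y-x)` of `[a,b]` with length `θ = |y-x|` one has
`u(γ t) ≥ σ_{κ⁻_γ}^{(1-t)}(θ) u(γ 0) + σ_{κ⁺_γ}^{(t)}(θ) u(γ 1)`, where the distortion
coefficients (possibly `∞`, with the convention `∞·0 = 0` in `ℝ≥0∞`) are expressed via the
sin-solutions `sp`, `sm` for the curvatures `κ⁺_γ(r) = κ(γ̄ r)` and `κ⁻_γ(r) = κ(γ̄(θ-r))`. -/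
theorem distributional_implies_distortion_inequality (a b : ℝ) (hab : a < b)
    (κ u : ℝ → ℝ) (hκ : ContinuousOn κ (Icc a b))
    (hu : ContinuousOn u (Icc a b)) (hunn : ∀ x ∈ Icc a b, 0 ≤ u x)
    (hdist : ∀ φ : ℝ → ℝ, ContDiff ℝ (⊤ : ℕ∞) φ → HasCompactSupport φ → tsupport φ ⊆ Ioo a b →
        (∀ x, 0 ≤ φ x) →
        (∫ x in a..b, deriv (deriv φ) x * u x) ≤ -∫ x in a..b, φ x * κ x * u x) :
    ∀ x ∈ Icc a b, ∀ y ∈ Icc a b, ∀ sp sp' sm sm' : ℝ → ℝ,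
      IsSinSolution (fun r => κ (x + (r / |y - x|) * (y - x))) sp sp' |y - x| →
      IsSinSolution (fun r => κ (x + (1 - r / |y - x|) * (y - x))) sm sm' |y - x| →
      ∀ t ∈ Icc (0:ℝ) 1,
        (if ∀ r ∈ Ioc (0:ℝ) |y - x|, 0 < sm r then
            ENNReal.ofReal (sm ((1 - t) * |y - x|) / sm |y - x|) else ⊤) *
              ENNReal.ofReal (u x) +
          (if ∀ r ∈ Ioc (0:ℝ) |y - x|, 0 < sp r then
            ENNReal.ofReal (sp (t * |y - x|) / sp |y - x|) else ⊤) *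
              ENNReal.ofReal (u y) ≤
          ENNReal.ofReal (u (x + t * (y - x))) := by
  intro x hx y hy sp sp' sm sm' hsp hsm t ht
  rcases eq_or_ne x y with rfl | hxy
  · simp [hsp.1, hsm.1]
  obtain ⟨K, hK⟩ := isCompact_Icc.exists_bound_of_continuousOn hκ
  have hw : IsJacobiSupersolution κ u (Ioo a b) :=
    isJacobiSupersolution_of_distributional hab.le hκ hu fun φ hφ =>
      hdist φ hφ.contDiff hφ.hasCompactSupport hφ.tsupport_subset hφ.nonneg
  simp only [← unitSpeedSegment_swap] at hsm
  by_cases hm_pos : ∀ r ∈ Ioc (0 : ℝ) |y - x|, 0 < sm r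
  · by_cases hp_pos : ∀ r ∈ Ioc (0 : ℝ) |y - x|, 0 < sp r
    · rw [if_pos hm_pos, if_pos hp_pos, ofReal_mul_add_ofReal_mul
        (hsm.distortion_nonneg hm_pos (abs_nonneg _) ⟨sub_nonneg.2 ht.2, sub_le_self 1 ht.1⟩)
        (hsp.distortion_nonneg hp_pos (abs_nonneg _) ht) (hunn x hx) (hunn y hy)]
      exact ENNReal.ofReal_le_ofReal
        (hw.distortion_le_segment hK hu hx hy hxy hsp hsm hp_pos hm_pos ht)
    · obtain ⟨hux, huy⟩ := hw.eq_zero_of_conjugate_segment hK hu hunn hx hy hxy hsp hp_pos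
      simp [hux, huy]
  · rw [abs_sub_comm] at hsm hm_pos
    obtain ⟨huy, hux⟩ := hw.eq_zero_of_conjugate_segment hK hu hunn hy hx hxy.symm hsm hm_pos
    simp [hux, huy]
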